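/- Let n ≥ 1 and let T₁, T₂ be n×n integer matrices with nonzero determinant. Write V(T) ⊆ ℤⁿ for the set consisting of the zero vector together with the n columns of T. Then the following are equivalent: (i) there exists v ∈ ℤⁿ with V(T₁) = v + V(T₂) and det T₁ and det T₂ have the same sign; (ii) there exists R ∈ 𝔓_n with det R = 1 and T₁ = T₂·Rᵀ. -/

import Mathlib

open Matrix

/-- The matrix `P_{n,i}`: the identity matrix except that every entry of its
`i`-th column equals `-1`. -/
def Pmat {n : ℕ} (i : Fin n) : Matrix (Fin n) (Fin n) ℤ :=
  Matrix.of fun j l => if l = i then -1 else if j = l then 1 else 0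

/-- The permutation matrix of the permutation `σ`. -/
def permMat {n : ℕ} (σ : Equiv.Perm (Fin n)) : Matrix (Fin n) (Fin n) ℤ :=
  Matrix.of fun j l => if j = σ l then 1 else 0

/-- `𝔓_n`: the subgroup of `GL_n(ℤ)` (the group of units of the ring of `n × n`
integer matrices) generated by the permutation matrices together with the matrices
`P_{n,1}, …, P_{n,n}`, viewed as a set of integer matrices. -/
def frakP (n : ℕ) : Set (Matrix (Fin n) (Fin n) ℤ) :=
  (fun u : (Matrix (Fin n) (Fin n) ℤ)ˣ => (u : Matrix (Fin n) (Fin n) ℤ)) ''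
    (Subgroup.closure {u : (Matrix (Fin n) (Fin n) ℤ)ˣ |
      (∃ σ : Equiv.Perm (Fin n), (u : Matrix (Fin n) (Fin n) ℤ) = permMat σ) ∨
      (∃ i : Fin n, (u : Matrix (Fin n) (Fin n) ℤ) = Pmat i)} : Set _)

/-- `V(T)`: the set consisting of the zero vector together with the `n` columns
of the matrix `T`; the vertex set of the lattice simplex `Δ(T)`. -/
def vertexSet {n : ℕ} (T : Matrix (Fin n) (Fin n) ℤ) : Set (Fin n → ℤ) :=
  insert (0 : Fin n → ℤ) (Set.range fun j => Tᵀ j)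

lemma mul_Pmat_apply {n : ℕ} (T : Matrix (Fin n) (Fin n) ℤ) (i r j : Fin n) :
    (T * (Pmat i)ᵀ) r j = if j = i then - T r i else T r j - T r i := by
  rw [Matrix.mul_apply]
  have : ∀ k, T r k * (Pmat i)ᵀ k j =
      (if k = i then - T r k else 0) + (if k = j then (if j = i then 0 else T r k) else 0) := by
    intro k
    simp only [Pmat, Matrix.transpose_apply, Matrix.of_apply]
    by_cases h1 : k = i <;> by_cases h2 : k = j <;> by_cases h3 : j = i <;> simp_all [eq_comm]
  simp only [this, Finset.sum_add_distrib, Finset.sum_ite_eq', Finset.mem_univ, if_true]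
  split_ifs <;> ring

lemma mul_permMat_apply {n : ℕ} (T : Matrix (Fin n) (Fin n) ℤ) (σ : Equiv.Perm (Fin n))
    (r j : Fin n) : (T * (permMat σ)ᵀ) r (σ j) = T r j := by
  rw [Matrix.mul_apply]
  simp [permMat]

lemma Pmat_sq {n : ℕ} (i : Fin n) : Pmat i * Pmat i = 1 := by
  rw [← Matrix.transpose_inj, Matrix.transpose_mul]
  ext r j
  rw [mul_Pmat_apply]
  simp only [Pmat, Matrix.transpose_apply, Matrix.of_apply, Matrix.one_apply]
  split_ifs <;> simp_all

lemma permMat_mul_inv {n : ℕ} (σ : Equiv.Perm (Fin n)) : permMat σ * permMat σ⁻¹ = 1 := by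
  ext r j
  rw [Matrix.mul_apply]
  simp [permMat, Matrix.one_apply]

def PU {n : ℕ} (i : Fin n) : (Matrix (Fin n) (Fin n) ℤ)ˣ := ⟨Pmat i, Pmat i, Pmat_sq i, Pmat_sq i⟩

def permU {n : ℕ} (σ : Equiv.Perm (Fin n)) : (Matrix (Fin n) (Fin n) ℤ)ˣ :=
  ⟨permMat σ, permMat σ⁻¹, permMat_mul_inv σ, by simpa using permMat_mul_inv σ⁻¹⟩

lemma vertexSet_P {n : ℕ} (T : Matrix (Fin n) (Fin n) ℤ) (i : Fin n) :
    vertexSet (T * (Pmat i)ᵀ) = (fun x => - Tᵀ i + x) '' vertexSet T := by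
  have hc : ∀ j, (T * (Pmat i)ᵀ)ᵀ j = if j = i then - Tᵀ i else - Tᵀ i + Tᵀ j := by
    intro j
    ext r
    rw [Matrix.transpose_apply, mul_Pmat_apply]
    split_ifs <;> simp [Matrix.transpose_apply]
    ring
  ext x
  simp only [vertexSet, Set.mem_insert_iff, Set.mem_range, Set.mem_image]
  constructor
  · rintro (rfl | ⟨j, rfl⟩)
    · exact ⟨Tᵀ i, Or.inr ⟨i, rfl⟩, by simp⟩
    · rw [hc]
      split_ifs with h
      · exact ⟨0, Or.inl rfl, by simp⟩
      · exact ⟨_, Or.inr ⟨j, rfl⟩, rfl⟩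
  · rintro ⟨y, (rfl | ⟨j, rfl⟩), rfl⟩
    · exact Or.inr ⟨i, by rw [hc]; simp⟩
    · by_cases h : j = i
      · left; subst h; simp
      · exact Or.inr ⟨j, by rw [hc, if_neg h]⟩

lemma vertexSet_perm {n : ℕ} (T : Matrix (Fin n) (Fin n) ℤ) (σ : Equiv.Perm (Fin n)) :
    vertexSet (T * (permMat σ)ᵀ) = vertexSet T := by
  unfold vertexSet
  congr 1
  rw [← σ.surjective.range_comp]
  congr 1
  funext j r
  exact mul_permMat_apply T σ r j

lemma vertexSet_closure {n : ℕ} (u : (Matrix (Fin n) (Fin n) ℤ)ˣ)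
    (hu : u ∈ Subgroup.closure {u : (Matrix (Fin n) (Fin n) ℤ)ˣ |
      (∃ σ : Equiv.Perm (Fin n), (u : Matrix (Fin n) (Fin n) ℤ) = permMat σ) ∨
      (∃ i : Fin n, (u : Matrix (Fin n) (Fin n) ℤ) = Pmat i)}) :
    ∀ T : Matrix (Fin n) (Fin n) ℤ, ∃ v : Fin n → ℤ,
      vertexSet (T * (u : Matrix (Fin n) (Fin n) ℤ)ᵀ) = (fun x => v + x) '' vertexSet T := by
  induction hu using Subgroup.closure_induction with
  | mem u h =>
    intro T
    rcases h with ⟨σ, h⟩ | ⟨i, h⟩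
    · exact ⟨0, by rw [h, vertexSet_perm]; simp⟩
    · exact ⟨_, by rw [h, vertexSet_P]⟩
  | one => exact fun T => ⟨0, by simp⟩
  | mul a b _ _ ha hb =>
    intro T
    obtain ⟨v, hv⟩ := hb T
    obtain ⟨w, hw⟩ := ha (T * (b : Matrix (Fin n) (Fin n) ℤ)ᵀ)
    refine ⟨w + v, ?_⟩
    rw [Units.val_mul, Matrix.transpose_mul, ← Matrix.mul_assoc, hw, hv, Set.image_image]
    simp only [add_assoc]
  | inv a _ ha =>
    intro T
    obtain ⟨v, hv⟩ := ha (T * ((a⁻¹ : (Matrix (Fin n) (Fin n) ℤ)ˣ) : Matrix (Fin n) (Fin n) ℤ)ᵀ)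
    refine ⟨-v, ?_⟩
    rw [Matrix.mul_assoc, ← Matrix.transpose_mul, Units.mul_inv, Matrix.transpose_one,
      Matrix.mul_one] at hv
    rw [hv, Set.image_image]
    simp

lemma col_ne_zero {n : ℕ} {T : Matrix (Fin n) (Fin n) ℤ} (h : T.det ≠ 0) (j : Fin n) :
    Tᵀ j ≠ 0 := fun h0 =>
  h (Matrix.det_eq_zero_of_column_eq_zero j fun i => congrFun h0 i)

lemma col_inj {n : ℕ} {T : Matrix (Fin n) (Fin n) ℤ} (h : T.det ≠ 0) :
    Function.Injective (fun j => Tᵀ j) := by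
  intro i j hij
  by_contra hne
  exact h (Matrix.det_zero_of_column_eq hne fun k => congrFun hij k)

lemma exists_perm {n : ℕ} {T S : Matrix (Fin n) (Fin n) ℤ} (hT : T.det ≠ 0) (hS : S.det ≠ 0)
    (h : vertexSet T = vertexSet S) : ∃ σ : Equiv.Perm (Fin n), T = S * (permMat σ)ᵀ := by
  have hex : ∀ j, ∃ k, Tᵀ k = Sᵀ j := by
    intro j
    have : Sᵀ j ∈ vertexSet T := by rw [h]; exact Or.inr ⟨j, rfl⟩
    rcases this with h0 | h0
    · exact absurd h0 (col_ne_zero hS j)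
    · exact h0
  choose f hf using hex
  have hfi : Function.Injective f := by
    intro a b hab
    apply col_inj hS
    change Sᵀ a = Sᵀ b
    rw [← hf a, ← hf b, hab]
  refine ⟨Equiv.ofBijective f (Finite.injective_iff_bijective.mp hfi), ?_⟩
  ext r k
  obtain ⟨j, rfl⟩ := (Equiv.ofBijective f (Finite.injective_iff_bijective.mp hfi)).surjective k
  rw [mul_permMat_apply]
  exact congrFun (hf j) r

lemma exists_closure {n : ℕ} {T₁ T₂ : Matrix (Fin n) (Fin n) ℤ} (h₁ : T₁.det ≠ 0)
    (h₂ : T₂.det ≠ 0) (v : Fin n → ℤ) (hv : vertexSet T₁ = (fun x => v + x) '' vertexSet T₂) :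
    ∃ R ∈ frakP n, T₁ = T₂ * Rᵀ := by
  have h0 : (0 : Fin n → ℤ) ∈ vertexSet T₁ := Or.inl rfl
  rw [hv] at h0
  obtain ⟨y, hy, hvy⟩ := h0
  rcases hy with rfl | ⟨i, rfl⟩
  · have : v = 0 := by simpa using hvy
    subst this
    obtain ⟨σ, hσ⟩ := exists_perm h₁ h₂ (by simpa using hv)
    exact ⟨_, ⟨permU σ, Subgroup.subset_closure (Or.inl ⟨σ, rfl⟩), rfl⟩, hσ⟩
  · have hvi : v = - T₂ᵀ i := eq_neg_of_add_eq_zero_left hvy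
    have hd : (T₂ * (Pmat i)ᵀ).det ≠ 0 := by
      rw [Matrix.det_mul, Matrix.det_transpose]
      refine mul_ne_zero h₂ ?_
      have := congrArg Matrix.det (Pmat_sq i)
      rw [Matrix.det_mul, Matrix.det_one] at this
      intro h
      simp [h] at this
    obtain ⟨σ, hσ⟩ := exists_perm h₁ hd (by rw [hv, vertexSet_P, hvi])
    refine ⟨_, ⟨permU σ * PU i, mul_mem (Subgroup.subset_closure (Or.inl ⟨σ, rfl⟩))
      (Subgroup.subset_closure (Or.inr ⟨i, rfl⟩)), rfl⟩, ?_⟩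
    rw [hσ, Matrix.mul_assoc, ← Matrix.transpose_mul]
    rfl

/-- The vertex sets of `Δ(T₁)` and `Δ(T₂)` are translates of each other with
`det T₁` and `det T₂` of the same sign iff `T₁ = T₂ · Rᵀ` for some `R ∈ 𝔓_n` with
`det R = 1`: the two simplices coincide up to translation as oriented simplices. -/
theorem vertexSet_translate_oriented_iff
    (n : ℕ) (hn : 1 ≤ n) (T₁ T₂ : Matrix (Fin n) (Fin n) ℤ)
    (h₁ : T₁.det ≠ 0) (h₂ : T₂.det ≠ 0) :
    ((∃ v : Fin n → ℤ, vertexSet T₁ = (fun x => v + x) '' vertexSet T₂) ∧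
        T₁.det.sign = T₂.det.sign) ↔
    (∃ R ∈ frakP n, R.det = 1 ∧ T₁ = T₂ * Rᵀ) := by
  constructor
  · rintro ⟨⟨v, hv⟩, hs⟩
    obtain ⟨R, hR, hT⟩ := exists_closure h₁ h₂ v hv
    refine ⟨R, hR, ?_, hT⟩
    obtain ⟨u, -, rfl⟩ := hR
    have hu : IsUnit (u : Matrix (Fin n) (Fin n) ℤ).det :=
      (Matrix.isUnit_iff_isUnit_det _).mp u.isUnit
    rcases Int.isUnit_iff.mp hu with h | h
    · exact h
    · exfalso
      rw [hT, Matrix.det_mul, Matrix.det_transpose, Int.sign_mul] at hs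
      simp only [h] at hs
      have := Int.sign_eq_zero_iff_zero.not.mpr h₂
      norm_num at hs
      omega
  · rintro ⟨R, ⟨u, hu, rfl⟩, hd, rfl⟩
    refine ⟨vertexSet_closure u hu T₂, ?_⟩
    rw [Matrix.det_mul, Matrix.det_transpose, hd, mul_one]
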